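/- Let h_0 > 0 and for each n set k = k(n) = ⌊(log n^d)^{1/d}⌋, and let 𝒯_n(h_0) := {x^n ∈ Σ^n : H(𝜇̃_x^{k(n),n}) ≤ k(n)^d · h_0}. Then for every ergodic process μ on Σ = 𝒜^{ℤ_{≥0}^d} with entropy rate h(μ) < h_0, lim_{n→∞} μ^n(𝒯_n(h_0)) = 1. -/

import Mathlib

open MeasureTheory Filter Topology

namespace SRU1408

/-- A site of the lattice `ℤ_{≥0}^d`. -/
abbrev Site (d : ℕ) := Fin d → ℕ

/-- An infinite array over the alphabet `Fin A`, i.e. an element of `Σ = 𝒜^{ℤ_{≥0}^d}`. -/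
abbrev Config (A d : ℕ) := Site d → Fin A

/-- A cubical `k`-word, i.e. an element of `Σ^k = 𝒜^{Λ_k}`. -/
abbrev Word (A d k : ℕ) := (Fin d → Fin k) → Fin A

variable {A d : ℕ}

/-- The pattern of `x` on the cube `Λ_k + c`, as a `k`-word. -/
def wordAt (x : Config A d) (k : ℕ) (c : Site d) : Word A d k :=
  fun i => x fun j => c j + (i j : ℕ)

/-- The lattice shift `σ_r`. -/
def shift (r : Site d) (x : Config A d) : Config A d := fun i => x (i + r)

/-- Stationarity: invariance under all shifts. -/
def Stationary (μ : Measure (Config A d)) : Prop := ∀ r : Site d, μ.map (shift r) = μ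

/-- Ergodicity: stationary, and every measurable set invariant under all shifts is trivial. -/
def ErgodicShift (μ : Measure (Config A d)) : Prop :=
  Stationary μ ∧ ∀ E : Set (Config A d), MeasurableSet E →
    (∀ r : Site d, shift r ⁻¹' E = E) → μ E = 0 ∨ μ E = 1

/-- The `k`-word marginal distribution `μ^k`, as a probability vector on `Σ^k`. -/
noncomputable def wordDist (μ : Measure (Config A d)) (k : ℕ) : Word A d k → ℝ :=
  fun w => (μ {x | wordAt x k 0 = w}).toReal

/-- Base-`A` entropy of a probability vector. -/
noncomputable def entH (A : ℕ) {W : Type*} [Fintype W] (p : W → ℝ) : ℝ :=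
  -∑ w, p w * Real.logb A (p w)

/-- `μ` has entropy rate `h` (base-`A` logarithms): `H(μ^n)/n^d → h`. -/
def HasEntropyRate (μ : Measure (Config A d)) (h : ℝ) : Prop :=
  Tendsto (fun n : ℕ => entH A (wordDist μ n) / (n : ℝ) ^ d) atTop (𝓝 h)

/-- The empirical non-overlapping `k`-block distribution `𝜇̃_x^{k,n}` of `x` over `Λ_n`. -/
noncomputable def empDist (x : Config A d) (k n : ℕ) : Word A d k → ℝ := fun w =>
  (Set.ncard {r : Fin d → Fin (n / k) | wordAt x k (fun j => k * (r j : ℕ)) = w} : ℝ) /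
    ((n / k : ℕ) : ℝ) ^ d

/-- The empirical probability `𝜇̃_x^{k,n}(S)` of a set `S` of `k`-words. -/
noncomputable def empProb (x : Config A d) (k n : ℕ) (S : Set (Word A d k)) : ℝ :=
  (Set.ncard {r : Fin d → Fin (n / k) | wordAt x k (fun j => k * (r j : ℕ)) ∈ S} : ℝ) /
    ((n / k : ℕ) : ℝ) ^ d

/-- `k(n) = ⌊(log_A n^d)^{1/d}⌋`. -/
noncomputable def kOf (A d n : ℕ) : ℕ :=
  ⌊(Real.logb A ((n : ℝ) ^ d)) ^ (1 / (d : ℝ))⌋₊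

/-!
Since `H(μ^m) / m^d → h`, for every `h' ∈ (h, h₀)` there is, for some `m`, a code for `m`-words
with codeword lengths `-log q(v)` and mean length under `μ^m` less than `m^d h'`. By the mean
ergodic theorem along the cubes `Λ_M`, the average of these lengths over all positions in `Λ_M` is
at most `m^d h'` with probability tending to one. Packing a `k`-cube with `m`-cells turns `q` into
a product code for `k`-words, and by Gibbs' inequality its mean length under the empirical
`k`-block distribution bounds the entropy of that distribution. On averaging over the offsets of
the packing, the cells visit every site at most once, so the bound is `k^d h'` up to the `o(k^d)`
letters that the cells fail to cover.
-/

section Folner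

open Finset

variable {G ι : Type*} [AddCancelCommMonoid G] [DecidableEq G]

/-- Følner families of finite subsets of a commutative monoid: eventually nonempty, and every
translation moves only a vanishing proportion of the set out of itself. (Mathlib's `IsAddFoelner`
is about group actions.) -/
structure IsFolner (l : Filter ι) (F : ι → Finset G) : Prop where
  eventually_nonempty : ∀ᶠ n in l, (F n).Nonempty
  tendsto_exit_ratio (t : G) :
    Tendsto (fun n => (#{g ∈ F n | g + t ∉ F n} : ℝ) / #(F n)) l (𝓝 0)

theorem norm_sum_translate_sub_sum_le {E : Type*} [SeminormedAddCommGroup E] {u : G → E} {B : ℝ}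
    (hu : ∀ g, ‖u g‖ ≤ B) (S : Finset G) (t : G) :
    ‖∑ g ∈ S, u (g + t) - ∑ g ∈ S, u g‖ ≤ 2 * B * #{g ∈ S | g + t ∉ S} := by
  set S' := S.map (addRightEmbedding t) with hS'
  have hexit : #(S' \ S) = #{g ∈ S | g + t ∉ S} := by
    rw [sdiff_eq_filter, filter_map, card_map]
    rfl
  have hsymm : #(S \ S') = #(S' \ S) := card_sdiff_comm (card_map _).symm
  have hsum : ∀ P : Finset G, ‖∑ g ∈ P, u g‖ ≤ #P * B := fun P => by
    simpa using norm_sum_le_of_le P fun g _ => hu g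
  calc ‖∑ g ∈ S, u (g + t) - ∑ g ∈ S, u g‖
      = ‖∑ g ∈ S' \ S, u g - ∑ g ∈ S \ S', u g‖ := by
        rw [sum_sdiff_sub_sum_sdiff, hS', sum_map]
        rfl
    _ ≤ #(S' \ S) * B + #(S \ S') * B := (norm_sub_le _ _).trans (add_le_add (hsum _) (hsum _))
    _ = 2 * B * #{g ∈ S | g + t ∉ S} := by
        rw [hsymm, hexit]
        ring

end Folner

section MeanErgodic

open Finset

variable {𝕜 G H : Type*} [RCLike 𝕜] [NormedAddCommGroup H]

section NormedSpace

variable [NormedSpace 𝕜 H] {T : G → H →L[𝕜] H}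

/-- The average of the operators `T g` over a finite set of indices. -/
noncomputable def operatorAverage (T : G → H →L[𝕜] H) (S : Finset G) : H →L[𝕜] H :=
  (#S : 𝕜)⁻¹ • ∑ g ∈ S, T g

/-- The subspace of vectors fixed by all operators `T g`. -/
def fixedSubspace (T : G → H →L[𝕜] H) : Submodule 𝕜 H := ⨅ g, (T g).eqLocus (1 : H →L[𝕜] H)

theorem mem_fixedSubspace {y : H} : y ∈ fixedSubspace T ↔ ∀ g, T g y = y := by
  simp [fixedSubspace]

theorem isClosed_fixedSubspace : IsClosed (fixedSubspace T : Set H) := by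
  rw [fixedSubspace, Submodule.coe_iInf]
  exact isClosed_iInter fun g => isClosed_eq (T g).continuous continuous_id

theorem operatorAverage_apply (S : Finset G) (y : H) :
    operatorAverage T S y = (#S : 𝕜)⁻¹ • ∑ g ∈ S, T g y := by
  simp [operatorAverage]

theorem norm_operatorAverage_le_one (hT : ∀ g, ‖T g‖ ≤ 1) (S : Finset G) :
    ‖operatorAverage T S‖ ≤ 1 :=
  calc ‖operatorAverage T S‖ = (#S : ℝ)⁻¹ * ‖∑ g ∈ S, T g‖ := by
        rw [operatorAverage, norm_smul, norm_inv, RCLike.norm_natCast]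
    _ ≤ (#S : ℝ)⁻¹ * #S := by
        gcongr
        simpa using norm_sum_le_of_le S fun g _ => hT g
    _ ≤ 1 := inv_mul_le_one

theorem operatorAverage_apply_of_mem_fixedSubspace {S : Finset G} (hS : S.Nonempty) {y : H}
    (hy : y ∈ fixedSubspace T) : operatorAverage T S y = y := by
  have hcard : (#S : 𝕜) ≠ 0 := by exact_mod_cast hS.card_ne_zero
  simp [operatorAverage_apply, mem_fixedSubspace.mp hy, ← Nat.cast_smul_eq_nsmul 𝕜, smul_smul,
    hcard]

theorem IsFolner.tendsto_operatorAverage_sub [AddCancelCommMonoid G] [DecidableEq G]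
    {ι : Type*} {l : Filter ι} {F : ι → Finset G} (hF : IsFolner l F)
    (hadd : ∀ g t, T (g + t) = T g ∘L T t) (hT : ∀ g, ‖T g‖ ≤ 1) (t : G) (y : H) :
    Tendsto (fun n => operatorAverage T (F n) (T t y - y)) l (𝓝 0) := by
  refine squeeze_zero_norm (fun n => ?_)
    (by simpa using (hF.tendsto_exit_ratio t).const_mul (2 * ‖y‖))
  have horbit : ∀ g, ‖T g y‖ ≤ ‖y‖ := fun g => by simpa using (T g).le_of_opNorm_le (hT g) y
  calc ‖operatorAverage T (F n) (T t y - y)‖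
      = (#(F n) : ℝ)⁻¹ * ‖∑ g ∈ F n, T (g + t) y - ∑ g ∈ F n, T g y‖ := by
        rw [operatorAverage_apply, norm_smul, norm_inv, RCLike.norm_natCast]
        simp [hadd, sum_sub_distrib]
    _ ≤ (#(F n) : ℝ)⁻¹ * (2 * ‖y‖ * #{g ∈ F n | g + t ∉ F n}) := by
        gcongr
        exact norm_sum_translate_sub_sum_le horbit (F n) t
    _ = 2 * ‖y‖ * (#{g ∈ F n | g + t ∉ F n} / #(F n)) := by ring

theorem IsFolner.tendsto_operatorAverage_of_mem_closure_span_sub [AddCancelCommMonoid G]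
    [DecidableEq G] {ι : Type*} {l : Filter ι} {F : ι → Finset G} (hF : IsFolner l F)
    (hadd : ∀ g t, T (g + t) = T g ∘L T t) (hT : ∀ g, ‖T g‖ ≤ 1) {y : H}
    (hy : y ∈ closure (Submodule.span 𝕜 {z | ∃ g y, z = T g y - y} : Set H)) :
    Tendsto (fun n => operatorAverage T (F n) y) l (𝓝 0) := by
  have hclosed : IsClosed {z | Tendsto (fun n => operatorAverage T (F n) z) l (𝓝 0)} :=
    (LipschitzWith.uniformEquicontinuous (fun n => operatorAverage T (F n)) 1 fun n =>
      (operatorAverage T (F n)).lipschitz.weaken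
        (norm_operatorAverage_le_one hT _)).equicontinuous.isClosed_setOfPred_tendsto
          continuous_const
  have hspan : ∀ z ∈ Submodule.span 𝕜 {z | ∃ g y, z = T g y - y},
      Tendsto (fun n => operatorAverage T (F n) z) l (𝓝 0) := by
    intro z hz
    induction hz using Submodule.span_induction with
    | mem z hz =>
      obtain ⟨g, y, rfl⟩ := hz
      exact hF.tendsto_operatorAverage_sub hadd hT g y
    | zero => simpa only [map_zero] using tendsto_const_nhds
    | add z w _ _ hz hw => simpa using hz.add hw
    | smul a z _ hz => simpa using hz.const_smul a
  exact closure_minimal hspan hclosed hy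

end NormedSpace

variable [InnerProductSpace 𝕜 H] {T : G → H →L[𝕜] H}

theorem orthogonal_span_sub_le_fixedSubspace (hT : ∀ g, ‖T g‖ ≤ 1) :
    (Submodule.span 𝕜 {z | ∃ g y, z = T g y - y})ᗮ ≤ fixedSubspace T := by
  intro z hz
  refine mem_fixedSubspace.mpr fun g => eq_of_norm_le_re_inner_eq_norm_sq (𝕜 := 𝕜) ?_ ?_
  · simpa using (T g).le_of_opNorm_le (hT g) z
  · have hinner : inner 𝕜 (T g z - z) z = 0 :=
      (Submodule.mem_orthogonal _ _).mp hz _ (Submodule.subset_span ⟨g, z, rfl⟩)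
    rw [inner_sub_left, sub_eq_zero] at hinner
    simp [hinner]

variable [CompleteSpace H]

instance : (fixedSubspace T).HasOrthogonalProjection :=
  have := isClosed_fixedSubspace (T := T).completeSpace_coe
  inferInstance

theorem IsFolner.tendsto_operatorAverage [AddCancelCommMonoid G] [DecidableEq G]
    {ι : Type*} {l : Filter ι} {F : ι → Finset G} (hF : IsFolner l F)
    (hadd : ∀ g t, T (g + t) = T g ∘L T t) (hT : ∀ g, ‖T g‖ ≤ 1) (y : H) :
    Tendsto (fun n => operatorAverage T (F n) y) l (𝓝 ((fixedSubspace T).starProjection y)) := by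
  set P := (fixedSubspace T).starProjection y
  have hmem : y - P ∈ closure (Submodule.span 𝕜 {z | ∃ g y, z = T g y - y} : Set H) := by
    rw [← Submodule.topologicalClosure_coe, ← Submodule.orthogonal_orthogonal_eq_closure]
    exact Submodule.orthogonal_le (orthogonal_span_sub_le_fixedSubspace hT)
      (Submodule.sub_starProjection_mem_orthogonal y)
  have hlim := hF.tendsto_operatorAverage_of_mem_closure_span_sub hadd hT hmem
  have hlim_add : Tendsto (fun n => operatorAverage T (F n) (y - P) + P) l (𝓝 P) := by
    simpa using hlim.add_const P
  refine hlim_add.congr' ?_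
  filter_upwards [hF.eventually_nonempty] with n hn
  rw [map_sub, operatorAverage_apply_of_mem_fixedSubspace hn
    (Submodule.starProjection_apply_mem _ y), sub_add_cancel]

end MeanErgodic

section ErgodicAction

open Finset

variable {G α : Type*} [MeasurableSpace α] {μ : Measure α}

theorem ergodicVAdd_of_forall_preimage_eq [AddCommMonoid G] [Countable G] [AddAction G α]
    [MeasurableConstVAdd G α] [VAddInvariantMeasure G α μ]
    (h : ∀ s : Set α, MeasurableSet s → (∀ g : G, (g +ᵥ ·) ⁻¹' s = s) →
      EventuallyConst s (ae μ)) :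
    ErgodicVAdd G α μ where
  aeconst_of_forall_preimage_vadd_ae_eq := by
    intro s hs hinv
    -- The orbits that eventually stay in `s` form a strictly invariant set.
    set F : Set α := ⋃ R : G, ⋂ g : G, ((g + R) +ᵥ ·) ⁻¹' s
    have mem_F : ∀ x, x ∈ F ↔ ∃ R : G, ∀ g : G, (g + R) +ᵥ x ∈ s := fun x => by
      simp only [F, Set.mem_iUnion, Set.mem_iInter, Set.mem_preimage]
    have hF : MeasurableSet F :=
      .iUnion fun R => .iInter fun g => measurable_const_vadd (g + R) hs
    have hFinv : ∀ t : G, (t +ᵥ ·) ⁻¹' F = F := by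
      refine fun t => Set.ext fun x => ?_
      rw [Set.mem_preimage, mem_F, mem_F]
      refine ⟨fun ⟨R, hR⟩ => ⟨R + t, fun g => ?_⟩, fun ⟨R, hR⟩ => ⟨R, fun g => ?_⟩⟩
      · simpa only [vadd_vadd, add_assoc] using hR g
      · simpa only [vadd_vadd, add_right_comm] using hR (g + t)
    refine (h F hF hFinv).congr ?_
    filter_upwards [ae_all_iff.mpr fun g => (hinv g).mem_iff] with x hx
    refine propext (?_ : x ∈ F ↔ x ∈ s)
    simp only [Set.mem_preimage] at hx
    simp only [mem_F, hx, forall_const, exists_const]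

theorem exists_ae_eq_const_of_comp_vadd_ae_eq [VAdd G α] [ErgodicVAdd G α μ] {f : α → ℝ}
    (hf : Measurable f) (hinv : ∀ g : G, (fun x => f (g +ᵥ x)) =ᵐ[μ] f) :
    ∃ c, f =ᵐ[μ] Function.const α c :=
  exists_eventuallyEq_const_of_forall_separating MeasurableSet fun U hU =>
    eventuallyConst_set.mp <|
      ErgodicVAdd.aeconst_of_forall_preimage_vadd_ae_eq (G := G) (hf hU) fun g =>
        (hinv g).preimage U

section Koopman

variable [AddCommMonoid G] [AddAction G α] [MeasurableConstVAdd G α]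
  (μ) [VAddInvariantMeasure G α μ]

/-- The Koopman operator `f ↦ f ∘ (g +ᵥ ·)` of a measure preserving action on real `L²`. -/
noncomputable def koopman (g : G) : Lp ℝ 2 μ →L[ℝ] Lp ℝ 2 μ :=
  (Lp.compMeasurePreservingₗᵢ ℝ (g +ᵥ ·) (measurePreserving_vadd g μ)).toContinuousLinearMap

theorem koopman_apply (g : G) (y : Lp ℝ 2 μ) :
    koopman μ g y = Lp.compMeasurePreserving (g +ᵥ ·) (measurePreserving_vadd g μ) y := rfl

theorem norm_koopman_le_one (g : G) : ‖koopman μ g‖ ≤ 1 :=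
  LinearIsometry.norm_toContinuousLinearMap_le _

theorem koopman_add (g t : G) : koopman μ (g + t) = koopman μ g ∘L koopman μ t := by
  ext1 y
  rw [ContinuousLinearMap.comp_apply, koopman_apply, koopman_apply, koopman_apply,
    ← Lp.compMeasurePreserving_comp_apply]
  congr 2
  funext x
  rw [Function.comp_apply, vadd_vadd, add_comm]

variable {μ}

theorem koopman_toLp_ae_eq {f : α → ℝ} (hf : MemLp f 2 μ) (g : G) :
    koopman μ g hf.toLp =ᵐ[μ] fun x => f (g +ᵥ x) :=
  (hf.comp_measurePreserving (measurePreserving_vadd g μ)).coeFn_toLp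

theorem operatorAverage_koopman_toLp_ae_eq {f : α → ℝ} (hf : MemLp f 2 μ) (S : Finset G) :
    operatorAverage (koopman μ) S hf.toLp =ᵐ[μ] fun x => (∑ g ∈ S, f (g +ᵥ x)) / #S := by
  have horbit : ∀ᵐ x ∂μ, ∀ g ∈ S, koopman μ g hf.toLp x = f (g +ᵥ x) :=
    (Finset.eventually_all S).mpr fun g _ => koopman_toLp_ae_eq hf g
  rw [operatorAverage_apply]
  filter_upwards [Lp.coeFn_smul (#S : ℝ)⁻¹ (∑ g ∈ S, koopman μ g hf.toLp),
    Lp.coeFn_finsetSum S fun g => koopman μ g hf.toLp, horbit] with x hsmul hsum horbit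
  rw [hsmul, Pi.smul_apply, hsum, Finset.sum_apply, sum_congr rfl horbit, smul_eq_mul,
    div_eq_inv_mul]

theorem indicatorConstLp_univ_mem_fixedSubspace_koopman [IsFiniteMeasure μ] (c : ℝ) :
    indicatorConstLp 2 .univ (measure_ne_top μ _) c ∈ fixedSubspace (koopman (G := G) μ) :=
  mem_fixedSubspace.mpr fun g =>
    Lp.indicatorConstLp_compMeasurePreserving .univ (measure_ne_top μ _) c
      (measurePreserving_vadd g μ)

theorem integral_starProjection_fixedSubspace_koopman [IsFiniteMeasure μ] (y : Lp ℝ 2 μ) :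
    ∫ x, (fixedSubspace (koopman (G := G) μ)).starProjection y x ∂μ = ∫ x, y x ∂μ := by
  have hint : ∀ z : Lp ℝ 2 μ,
      ∫ x, z x ∂μ = inner ℝ z (indicatorConstLp 2 .univ (measure_ne_top μ _) 1) := fun z => by
    rw [real_inner_comm, L2.inner_indicatorConstLp_one, Measure.restrict_univ]
  rw [hint, hint, Submodule.inner_starProjection_left_eq_right,
    Submodule.starProjection_eq_self_iff.mpr (indicatorConstLp_univ_mem_fixedSubspace_koopman 1)]

end Koopman

theorem ae_eq_integral_of_mem_fixedSubspace_koopman [AddCommMonoid G] [AddAction G α]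
    [MeasurableConstVAdd G α] [ErgodicVAdd G α μ] [IsProbabilityMeasure μ] {y : Lp ℝ 2 μ}
    (hy : y ∈ fixedSubspace (koopman (G := G) μ)) : y =ᵐ[μ] fun _ => ∫ x, y x ∂μ := by
  obtain ⟨c, hc⟩ := exists_ae_eq_const_of_comp_vadd_ae_eq (G := G)
    (Lp.stronglyMeasurable y).measurable fun g => by
      have hcomp := Lp.coeFn_compMeasurePreserving y (measurePreserving_vadd g μ)
      rw [← koopman_apply, mem_fixedSubspace.mp hy g] at hcomp
      exact hcomp.symm
  have hmean : ∫ x, y x ∂μ = c := by simp [integral_congr_ae hc]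
  rwa [hmean]

theorem IsFolner.tendstoInMeasure_average [AddCancelCommMonoid G] [DecidableEq G] [AddAction G α]
    [MeasurableConstVAdd G α] [ErgodicVAdd G α μ] [IsProbabilityMeasure μ] {ι : Type*}
    {l : Filter ι} {F : ι → Finset G} (hF : IsFolner l F) {f : α → ℝ} (hf : MemLp f 2 μ) :
    TendstoInMeasure μ (fun n x => (∑ g ∈ F n, f (g +ᵥ x)) / #(F n)) l
      fun _ => ∫ x, f x ∂μ := by
  have hlim := hF.tendsto_operatorAverage (koopman_add μ) (norm_koopman_le_one μ) hf.toLp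
  refine (tendstoInMeasure_of_tendsto_Lp hlim).congr
    (fun n => operatorAverage_koopman_toLp_ae_eq hf (F n)) ?_
  refine (ae_eq_integral_of_mem_fixedSubspace_koopman
    (Submodule.starProjection_apply_mem _ _)).trans (.of_eq ?_)
  rw [integral_starProjection_fixedSubspace_koopman, integral_congr_ae hf.coeFn_toLp]

end ErgodicAction

theorem tendsto_measureReal_le_of_tendstoInMeasure_const {α ι : Type*} [MeasurableSpace α]
    {μ : Measure α} [IsProbabilityMeasure μ] {l : Filter ι} {f : ι → α → ℝ} {c a : ℝ}
    (hf : TendstoInMeasure μ f l fun _ => c) (hca : c < a) :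
    Tendsto (fun n => μ.real {x | f n x ≤ a}) l (𝓝 1) := by
  have hfar := (tendstoInMeasure_iff_measureReal_norm.mp hf (a - c) (sub_pos.mpr hca)).const_sub 1
  rw [sub_zero] at hfar
  refine tendsto_of_tendsto_of_tendsto_of_le_of_le hfar tendsto_const_nhds (fun n => ?_)
    fun n => measureReal_le_one
  rw [sub_le_iff_le_add, ← probReal_univ (μ := μ)]
  refine (measureReal_mono fun x _ => ?_).trans (measureReal_union_le _ _)
  by_contra! hx
  simp only [Set.mem_union, Set.mem_ofPred_eq, not_or, not_le, Real.norm_eq_abs] at hx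
  linarith [(abs_lt.mp hx.2).2]

theorem tendsto_natCast_div_of_le_of_le_add {φ : ℕ → ℕ} {c : ℕ} (hle : ∀ n, φ n ≤ n)
    (hge : ∀ n, n ≤ φ n + c) : Tendsto (fun n => (φ n : ℝ) / n) atTop (𝓝 1) := by
  have hlow : Tendsto (fun n : ℕ => 1 - (c : ℝ) / n) atTop (𝓝 1) := by
    simpa using (tendsto_const_div_atTop_nhds_zero_nat (c : ℝ)).const_sub 1
  refine tendsto_of_tendsto_of_tendsto_of_le_of_le' hlow tendsto_const_nhds ?_
    (.of_forall fun n => div_le_one_of_le₀ (by exact_mod_cast hle n) n.cast_nonneg)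
  filter_upwards [eventually_gt_atTop 0] with n hn
  have hn' : (0 : ℝ) < n := by exact_mod_cast hn
  rw [one_sub_div hn'.ne', div_le_div_iff_of_pos_right hn', sub_le_iff_le_add]
  exact_mod_cast hge n

section Cube

open Finset

/-- The cube `Λ_M` as a finite set of sites. -/
def cube (d M : ℕ) : Finset (Site d) := Fintype.piFinset fun _ => range M

theorem mem_cube {M : ℕ} {i : Site d} : i ∈ cube d M ↔ ∀ j, i j < M := by
  simp [cube]

theorem card_cube (d M : ℕ) : #(cube d M) = M ^ d := by
  simp [cube]

theorem cube_mono {M N : ℕ} (h : M ≤ N) : cube d M ⊆ cube d N :=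
  Fintype.piFinset_subset _ _ fun _ => range_mono h

variable {E : Type*} [AddCommMonoid E]

theorem sum_univ_fin_eq_sum_cube (M : ℕ) (F : Site d → E) :
    ∑ r : Fin d → Fin M, F (fun j => r j) = ∑ i ∈ cube d M, F i :=
  sum_bij (fun r _ j => (r j : ℕ)) (fun r _ => mem_cube.mpr fun j => (r j).isLt)
    (fun _ _ _ _ h => funext fun j => Fin.ext (congrFun h j))
    (fun i hi => ⟨fun j => ⟨i j, mem_cube.mp hi j⟩, mem_univ _, rfl⟩) fun _ _ => rfl

theorem sum_cube_mul (k N : ℕ) (F : Site d → E) :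
    ∑ i ∈ cube d (k * N), F i = ∑ r ∈ cube d N, ∑ s ∈ cube d k, F (k • r + s) := by
  rw [← sum_product']
  refine sum_nbij' (fun i => (fun j => i j / k, fun j => i j % k)) (fun p => k • p.1 + p.2)
    (fun i hi => ?_) (fun p hp => ?_) (fun i _ => ?_) (fun p hp => ?_) fun i _ => ?_
  · have hi := mem_cube.mp hi
    exact mem_product.mpr ⟨mem_cube.mpr fun j => Nat.div_lt_of_lt_mul (hi j),
      mem_cube.mpr fun j => Nat.mod_lt _ (Nat.pos_of_mul_pos_right (Nat.zero_lt_of_lt (hi j)))⟩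
  · obtain ⟨hr, hs⟩ := mem_product.mp hp
    refine mem_cube.mpr fun j => ?_
    calc k * p.1 j + p.2 j < k * (p.1 j + 1) := by
          rw [mul_add_one]
          exact Nat.add_lt_add_left (mem_cube.mp hs j) _
      _ ≤ k * N := Nat.mul_le_mul_left k (mem_cube.mp hr j)
  · exact funext fun j => Nat.div_add_mod (i j) k
  · have hs := mem_cube.mp (mem_product.mp hp).2
    refine Prod.ext (funext fun j => ?_) (funext fun j => ?_)
    · simp [Nat.mul_add_div (Nat.zero_lt_of_lt (hs j)), Nat.div_eq_of_lt (hs j)]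
    · simp [Nat.mod_eq_of_lt (hs j)]
  · exact congrArg F (funext fun j => (Nat.div_add_mod (i j) k).symm)

theorem card_filter_add_mem_cube (M : ℕ) (t : Site d) :
    #{i ∈ cube d M | i + t ∈ cube d M} = ∏ j, (M - t j) := by
  have hbox : {i ∈ cube d M | i + t ∈ cube d M} = Fintype.piFinset fun j => range (M - t j) := by
    ext i
    simp only [mem_filter, mem_cube, Pi.add_apply, Fintype.mem_piFinset, mem_range, ← forall_and]
    exact forall_congr' fun j => by omega
  simp [hbox]

theorem isFolner_cube (d : ℕ) : IsFolner atTop (cube d) where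
  eventually_nonempty := by
    filter_upwards [eventually_gt_atTop 0] with M hM
    exact ⟨0, mem_cube.mpr fun _ => hM⟩
  tendsto_exit_ratio t := by
    have hstay : Tendsto (fun M : ℕ => ∏ j, ((M - t j : ℕ) : ℝ) / M) atTop (𝓝 1) := by
      simpa using tendsto_finsetProd univ fun j _ => tendsto_natCast_div_of_le_of_le_add
        (φ := (· - t j)) (c := t j) (fun n => by omega) (fun n => by omega)
    have hexit := hstay.const_sub 1
    rw [sub_self] at hexit
    refine hexit.congr' ?_
    filter_upwards [eventually_gt_atTop 0] with M hM
    have hsplit : (#{i ∈ cube d M | i + t ∈ cube d M} : ℝ) + #{i ∈ cube d M | i + t ∉ cube d M} =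
        (M : ℝ) ^ d := by
      exact_mod_cast (card_filter_add_card_filter_not _).trans (card_cube d M)
    rw [card_filter_add_mem_cube] at hsplit
    rw [prod_div_distrib, prod_const, card_univ, Fintype.card_fin, card_cube, Nat.cast_pow,
      one_sub_div (by positivity), ← hsplit, Nat.cast_prod, add_sub_cancel_left]

end Cube

theorem shift_add (r s : Site d) (x : Config A d) : shift (r + s) x = shift r (shift s x) :=
  funext fun i => congrArg x (add_assoc i r s).symm

/-- The semigroup `ℤ_{≥0}^d` acts on configurations by the lattice shifts. -/
instance : AddAction (Site d) (Config A d) where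
  vadd := shift
  zero_vadd _ := rfl
  add_vadd := shift_add

theorem vadd_eq_shift (r : Site d) (x : Config A d) : r +ᵥ x = shift r x := rfl

instance : MeasurableConstVAdd (Site d) (Config A d) where
  measurable_const_vadd _ := measurable_pi_lambda _ fun _ => measurable_pi_apply _

theorem ErgodicShift.ergodicVAdd {μ : Measure (Config A d)} [IsProbabilityMeasure μ]
    (hμ : ErgodicShift μ) : ErgodicVAdd (Site d) (Config A d) μ := by
  have : VAddInvariantMeasure (Site d) (Config A d) μ := ⟨fun r s hs => by
    rw [← Measure.map_apply (measurable_const_vadd r) hs]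
    exact congrArg (· s) (hμ.1 r)⟩
  refine ergodicVAdd_of_forall_preimage_eq (G := Site d) fun s hs hinv => ?_
  rw [eventuallyConst_set]
  exact (hμ.2 s hs hinv).symm.imp (mem_ae_iff_prob_eq_one hs).mpr measure_eq_zero_iff_ae_notMem.mp

section CrossEntropy

variable {W : Type*} [Fintype W]

/-- The cross entropy `-∑ p log_b q`: the mean length, under `p`, of the ideal code for `q`. -/
noncomputable def crossEntropy (b : ℕ) (p q : W → ℝ) : ℝ :=
  ∑ w, p w * -Real.logb b (q w)

theorem mul_log_sub_log_le {x y : ℝ} (hx : 0 ≤ x) (hy : 0 < y) :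
    x * (Real.log y - Real.log x) ≤ y - x := by
  rcases hx.eq_or_lt with rfl | hx
  · simpa using hy.le
  · rw [← Real.log_div hy.ne' hx.ne']
    calc x * Real.log (y / x) ≤ x * (y / x - 1) := by
          gcongr
          exact Real.log_le_sub_one_of_pos (div_pos hy hx)
      _ = y - x := by field_simp

theorem entH_le_crossEntropy (b : ℕ) {p q : W → ℝ} (hp : ∀ w, 0 ≤ p w) (hq : ∀ w, 0 < q w)
    (hsum : ∑ w, q w ≤ ∑ w, p w) : entH b p ≤ crossEntropy b p q := by
  have hdiv : entH b p - crossEntropy b p q =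
      (∑ w, p w * (Real.log (q w) - Real.log (p w))) / Real.log b := by
    rw [entH, crossEntropy, Finset.sum_div, ← Finset.sum_neg_distrib, ← Finset.sum_sub_distrib]
    refine Finset.sum_congr rfl fun w _ => ?_
    simp only [Real.logb]
    ring
  rw [← sub_nonpos, hdiv]
  refine div_nonpos_of_nonpos_of_nonneg ?_ (Real.log_natCast_nonneg b)
  calc ∑ w, p w * (Real.log (q w) - Real.log (p w)) ≤ ∑ w, (q w - p w) :=
        Finset.sum_le_sum fun w _ => mul_log_sub_log_le (hp w) (hq w)
    _ ≤ 0 := by rwa [Finset.sum_sub_distrib, sub_nonpos]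

theorem crossEntropy_le_entH_add_of_half_le (b : ℕ) {p q : W → ℝ} (hp : p ∈ stdSimplex ℝ W)
    (hpq : ∀ w, p w / 2 ≤ q w) : crossEntropy b p q ≤ entH b p + Real.logb b 2 := by
  have hterm : ∀ w, p w * -Real.logb b (q w) ≤
      p w * -Real.logb b (p w) + p w * Real.logb b 2 := by
    intro w
    rcases (hp.1 w).eq_or_lt with hw | hw
    · simp [← hw]
    · have hlog : Real.log (p w) - Real.log 2 ≤ Real.log (q w) := by
        rw [← Real.log_div hw.ne' two_ne_zero]
        exact Real.log_le_log (half_pos hw) (hpq w)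
      have hlogb : Real.logb b (p w) - Real.logb b 2 ≤ Real.logb b (q w) := by
        simp only [Real.logb, ← sub_div]
        exact div_le_div_of_nonneg_right hlog (Real.log_natCast_nonneg b)
      rw [← mul_add]
      exact mul_le_mul_of_nonneg_left (by linarith) hw.le
  calc crossEntropy b p q ≤ ∑ w, (p w * -Real.logb b (p w) + p w * Real.logb b 2) :=
        Finset.sum_le_sum fun w _ => hterm w
    _ = entH b p + Real.logb b 2 := by
        rw [Finset.sum_add_distrib, ← Finset.sum_mul, hp.2, one_mul, entH]
        simp only [mul_neg, Finset.sum_neg_distrib]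

theorem exists_pos_crossEntropy_le (b : ℕ) {p : W → ℝ} (hp : p ∈ stdSimplex ℝ W) :
    ∃ q ∈ stdSimplex ℝ W, (∀ w, 0 < q w) ∧ crossEntropy b p q ≤ entH b p + Real.logb b 2 := by
  have : Nonempty W := by
    by_contra! hW
    simpa using hp.2
  have hcard : (0 : ℝ) < (Fintype.card W : ℝ)⁻¹ := by
    have := Fintype.card_pos (α := W)
    positivity
  have hpos : ∀ w, 0 < (p w + (Fintype.card W : ℝ)⁻¹) / 2 := fun w =>
    half_pos (add_pos_of_nonneg_of_pos (hp.1 w) hcard)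
  refine ⟨fun w => (p w + (Fintype.card W : ℝ)⁻¹) / 2, ⟨fun w => (hpos w).le, ?_⟩, hpos,
    crossEntropy_le_entH_add_of_half_le b hp fun w => by linarith⟩
  rw [← Finset.sum_div, Finset.sum_add_distrib, hp.2, Finset.sum_const, Finset.card_univ,
    nsmul_eq_mul, mul_inv_cancel₀ (inv_pos.mp hcard).ne', one_add_one_eq_two,
    div_self two_ne_zero]

end CrossEntropy

section EmpiricalDistribution

open Finset

theorem sum_empDist_mul (x : Config A d) (k n : ℕ) (g : Word A d k → ℝ) :
    ∑ w, empDist x k n w * g w =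
      (∑ r ∈ cube d (n / k), g (wordAt x k (k • r))) / ((n / k : ℕ) : ℝ) ^ d := by
  classical
  rw [← sum_univ_fin_eq_sum_cube (n / k) fun r => g (wordAt x k (k • r)), ← sum_fiberwise univ
    fun r : Fin d → Fin (n / k) => wordAt x k fun j => k * (r j : ℕ), sum_div]
  refine sum_congr rfl fun w _ => ?_
  have hconst : ∀ r ∈ univ.filter fun r : Fin d → Fin (n / k) =>
      wordAt x k (fun j => k * (r j : ℕ)) = w, g (wordAt x k (k • fun j => (r j : ℕ))) = g w :=
    fun r hr => congrArg g (mem_filter.mp hr).2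
  rw [sum_congr rfl hconst, sum_const, nsmul_eq_mul, empDist, Set.ncard_eq_toFinset_card',
    Set.toFinset_ofPred]
  ring

theorem empDist_mem_stdSimplex (x : Config A d) {k n : ℕ} (h : 0 < n / k) :
    empDist x k n ∈ stdSimplex ℝ (Word A d k) := by
  refine ⟨fun w => by unfold empDist; positivity, ?_⟩
  have hsum := sum_empDist_mul x k n fun _ => 1
  simp only [mul_one, sum_const, card_cube, nsmul_eq_mul, Nat.cast_pow] at hsum
  rw [hsum, div_self (by positivity)]

end EmpiricalDistribution

theorem wordAt_eq_wordAt_shift (x : Config A d) (m : ℕ) (i : Site d) :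
    wordAt x m i = wordAt (shift i x) m 0 :=
  funext fun _ => congrArg x (funext fun j => by simp [add_comm])

theorem measurable_wordAt (m : ℕ) (c : Site d) :
    Measurable fun x : Config A d => wordAt x m c :=
  measurable_pi_lambda _ fun _ => measurable_pi_apply _

theorem integral_comp_wordAt (μ : Measure (Config A d)) [IsFiniteMeasure μ] (m : ℕ)
    (g : Word A d m → ℝ) : ∫ x, g (wordAt x m 0) ∂μ = ∑ v, wordDist μ m v * g v := by
  have hmeas := measurable_wordAt (A := A) (d := d) m 0
  rw [← integral_map (φ := fun x : Config A d => wordAt x m 0) hmeas.aemeasurable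
    (measurable_of_countable g).aestronglyMeasurable, integral_fintype .of_finite]
  refine Finset.sum_congr rfl fun v _ => ?_
  rw [smul_eq_mul, map_measureReal_apply hmeas (measurableSet_singleton v)]
  rfl

theorem wordDist_mem_stdSimplex (μ : Measure (Config A d)) [IsProbabilityMeasure μ] (m : ℕ) :
    wordDist μ m ∈ stdSimplex ℝ (Word A d m) :=
  ⟨fun _ => ENNReal.toReal_nonneg, by simpa using (integral_comp_wordAt μ m fun _ => 1).symm⟩

theorem HasEntropyRate.exists_crossEntropy_lt (hd : 1 ≤ d) {μ : Measure (Config A d)}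
    [IsProbabilityMeasure μ] {h h' : ℝ} (hrate : HasEntropyRate μ h) (hh : h < h') :
    ∃ m : ℕ, 0 < m ∧ ∃ q ∈ stdSimplex ℝ (Word A d m), (∀ v, 0 < q v) ∧
      crossEntropy A (wordDist μ m) q < (m : ℝ) ^ d * h' := by
  have hinv : Tendsto (fun m : ℕ => Real.logb A 2 / (m : ℝ) ^ d) atTop (𝓝 0) :=
    tendsto_const_nhds.div_atTop
      ((tendsto_pow_atTop (by lia)).comp tendsto_natCast_atTop_atTop)
  have hsum := hrate.add hinv
  rw [add_zero] at hsum
  obtain ⟨m, hlt, hm⟩ := ((hsum.eventually_lt_const hh).and (eventually_gt_atTop 0)).exists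
  obtain ⟨q, hq, hqpos, hcross⟩ := exists_pos_crossEntropy_le A (wordDist_mem_stdSimplex μ m)
  refine ⟨m, hm, q, hq, hqpos, hcross.trans_lt ?_⟩
  rwa [← add_div, div_lt_iff₀' (by positivity)] at hlt

section BlockCode

open Finset

theorem sum_prod_comp_injective {S C B α : Type*} [Fintype S] [Fintype C] [Fintype B] [Fintype α]
    [DecidableEq S] [DecidableEq B] {e : C × B → S} (he : Function.Injective e) (q : (B → α) → ℝ) :
    ∑ w : S → α, ∏ c, q (fun b => w (e (c, b))) =
      (Fintype.card α : ℝ) ^ (Fintype.card S - Fintype.card C * Fintype.card B) *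
        (∑ v, q v) ^ Fintype.card C := by
  classical
  let E : (S → α) ≃ (C → B → α) × ({s // s ∉ Set.range e} → α) :=
    (Equiv.piEquivPiSubtypeProd (fun s => s ∈ Set.range e) fun _ => α).trans
      (Equiv.prodCongr ((Equiv.arrowCongr (Equiv.ofInjective e he).symm (Equiv.refl α)).trans
        (Equiv.curry C B α)) (Equiv.refl _))
  have hcard : Fintype.card {s // s ∉ Set.range e} =
      Fintype.card S - Fintype.card C * Fintype.card B := by
    rw [Fintype.card_subtype_compl, ← Fintype.card_prod,
      Fintype.card_congr (Equiv.ofInjective e he)]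
  calc ∑ w : S → α, ∏ c, q (fun b => w (e (c, b)))
      = ∑ w : S → α, ∏ c, q ((E w).1 c) := rfl
    _ = ∑ v : (C → B → α) × ({s // s ∉ Set.range e} → α), ∏ c, q (v.1 c) :=
        E.sum_comp fun v => ∏ c, q (v.1 c)
    _ = _ := by
        simp only [Fintype.sum_prod_type, sum_const, card_univ, Fintype.card_fun, nsmul_eq_mul,
          hcard, Nat.cast_pow]
        rw [← mul_sum, ← Fintype.prod_sum, prod_const, card_univ]

variable {m L k : ℕ} {s : Site d}

/-- The site of `Λ_k` at place `b` of the `c`-th cell, where `L^d` adjacent cells of side `m` are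
laid out from the corner `s`. -/
def cellSite (hs : ∀ j, s j + L * m ≤ k) (cb : (Fin d → Fin L) × (Fin d → Fin m)) :
    Fin d → Fin k :=
  fun j => Fin.castLE (hs j) (Fin.natAdd (s j) (finProdFinEquiv (cb.1 j, cb.2 j)))

theorem cellSite_injective (hs : ∀ j, s j + L * m ≤ k) : Function.Injective (cellSite hs) := by
  intro x y hxy
  have hpair : ∀ j, (x.1 j, x.2 j) = (y.1 j, y.2 j) := fun j =>
    finProdFinEquiv.injective <| Fin.natAdd_injective _ _ <| Fin.castLE_injective (hs j) <|
      congrFun hxy j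
  exact Prod.ext (funext fun j => congrArg Prod.fst (hpair j))
    (funext fun j => congrArg Prod.snd (hpair j))

theorem wordAt_comp_cellSite (hs : ∀ j, s j + L * m ≤ k) (x : Config A d) (i : Site d)
    (c : Fin d → Fin L) :
    (fun b => wordAt x k i (cellSite hs (c, b))) =
      wordAt x m (i + (m • (fun j => (c j : ℕ)) + s)) := by
  funext b
  simp only [wordAt, cellSite, Fin.val_castLE, Fin.val_natAdd, finProdFinEquiv_apply_val,
    Pi.add_apply, Pi.smul_apply, smul_eq_mul]
  congr 1
  funext j
  ring

/-- The probability vector on `k`-words under which the letters are independent across the cells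
of `cellSite`, each cell being distributed as `q` and each letter outside the cells uniformly. -/
noncomputable def blockWeight (hs : ∀ j, s j + L * m ≤ k) (q : Word A d m → ℝ) (w : Word A d k) :
    ℝ :=
  (∏ c, q fun b => w (cellSite hs (c, b))) * ((A : ℝ) ^ (k ^ d - (L * m) ^ d))⁻¹

theorem sum_blockWeight (hA : 0 < A) (hs : ∀ j, s j + L * m ≤ k) {q : Word A d m → ℝ}
    (hq : ∑ v, q v = 1) : ∑ w, blockWeight hs q w = 1 := by
  simp only [blockWeight]
  rw [← sum_mul, sum_prod_comp_injective (cellSite_injective hs), hq]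
  simp only [Fintype.card_fun, Fintype.card_fin, one_pow, mul_one, ← mul_pow]
  exact mul_inv_cancel₀ (by positivity)

theorem blockWeight_pos (hA : 0 < A) (hs : ∀ j, s j + L * m ≤ k) {q : Word A d m → ℝ}
    (hq : ∀ v, 0 < q v) (w : Word A d k) : 0 < blockWeight hs q w :=
  mul_pos (prod_pos fun _ _ => hq _) (by positivity)

theorem neg_logb_blockWeight (hA : 1 < A) (hs : ∀ j, s j + L * m ≤ k) {q : Word A d m → ℝ}
    (hq : ∀ v, 0 < q v) (w : Word A d k) :
    -Real.logb A (blockWeight hs q w) =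
      (∑ c, -Real.logb A (q fun b => w (cellSite hs (c, b)))) + ((k : ℝ) ^ d - (L * m) ^ d) := by
  have hcells : (L * m) ^ d ≤ k ^ d := by
    simpa [mul_pow] using Fintype.card_le_of_injective _ (cellSite_injective hs)
  rw [blockWeight, Real.logb_mul (prod_pos fun _ _ => hq _).ne' (by positivity), Real.logb_inv,
    Real.logb_pow, Real.logb_self_eq_one (by exact_mod_cast hA),
    Real.logb_prod _ _ fun _ _ => (hq _).ne', Nat.cast_sub hcells, sum_neg_distrib]
  push_cast
  ring

variable {n : ℕ} {q : Word A d m → ℝ}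

theorem entH_empDist_le_of_offset (hA : 1 < A) (hs : ∀ j, s j + L * m ≤ k) (hn : 0 < n / k)
    (hq : q ∈ stdSimplex ℝ (Word A d m)) (hqpos : ∀ v, 0 < q v) (x : Config A d) :
    entH A (empDist x k n) ≤
      (∑ r ∈ cube d (n / k), ∑ c ∈ cube d L,
        -Real.logb A (q (wordAt x m (k • r + (m • c + s))))) / ((n / k : ℕ) : ℝ) ^ d +
      ((k : ℝ) ^ d - (L * m) ^ d) := by
  have hp := empDist_mem_stdSimplex x hn
  have hcode : ∀ r : Site d, -Real.logb A (blockWeight hs q (wordAt x k (k • r))) =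
      (∑ c ∈ cube d L, -Real.logb A (q (wordAt x m (k • r + (m • c + s))))) +
        ((k : ℝ) ^ d - (L * m) ^ d) := fun r => by
    simp only [neg_logb_blockWeight hA hs hqpos, wordAt_comp_cellSite, add_left_inj]
    exact sum_univ_fin_eq_sum_cube L fun c => -Real.logb A (q (wordAt x m (k • r + (m • c + s))))
  calc entH A (empDist x k n) ≤ crossEntropy A (empDist x k n) (blockWeight hs q) :=
        entH_le_crossEntropy A hp.1 (blockWeight_pos (by lia) hs hqpos)
          (by rw [sum_blockWeight (by lia) hs hq.2, hp.2])
    _ = _ := by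
        rw [crossEntropy, sum_empDist_mul, sum_congr rfl fun r _ => hcode r, sum_add_distrib,
          sum_const, card_cube, nsmul_eq_mul, Nat.cast_pow, add_div,
          mul_div_cancel_left₀ _ (by positivity)]

theorem sum_cells_le_sum_cube (hLm : m * L ≤ k) (N : ℕ) {F : Site d → ℝ} (hF : ∀ i, 0 ≤ F i) :
    ∑ s ∈ cube d m, ∑ r ∈ cube d N, ∑ c ∈ cube d L, F (k • r + (m • c + s)) ≤
      ∑ i ∈ cube d (k * N), F i :=
  calc ∑ s ∈ cube d m, ∑ r ∈ cube d N, ∑ c ∈ cube d L, F (k • r + (m • c + s))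
      = ∑ r ∈ cube d N, ∑ i ∈ cube d (m * L), F (k • r + i) := by
        rw [sum_comm]
        refine sum_congr rfl fun r _ => ?_
        rw [sum_comm, ← sum_cube_mul m L fun i => F (k • r + i)]
    _ ≤ ∑ r ∈ cube d N, ∑ i ∈ cube d k, F (k • r + i) :=
        sum_le_sum fun r _ => sum_le_sum_of_subset_of_nonneg (cube_mono hLm)
          fun i _ _ => hF _
    _ = ∑ i ∈ cube d (k * N), F i := (sum_cube_mul k N F).symm

/-- Averaging over the offsets `s ∈ Λ_m` makes the cells visit every site at most once. -/
theorem entH_empDist_le (hA : 1 < A) (hk : m * (L + 1) ≤ k) (hn : 0 < n / k)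
    (hq : q ∈ stdSimplex ℝ (Word A d m)) (hqpos : ∀ v, 0 < q v) (x : Config A d) :
    (m : ℝ) ^ d * entH A (empDist x k n) ≤
      (∑ i ∈ cube d (k * (n / k)), -Real.logb A (q (wordAt x m i))) / ((n / k : ℕ) : ℝ) ^ d +
        (m : ℝ) ^ d * ((k : ℝ) ^ d - (L * m) ^ d) := by
  have hcost : ∀ v, 0 ≤ -Real.logb A (q v) := fun v => neg_nonneg.mpr <|
    Real.logb_nonpos (by exact_mod_cast hA) (hqpos v).le
      ((single_le_sum (fun u _ => hq.1 u) (mem_univ v)).trans_eq hq.2)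
  have hfit : ∀ s ∈ cube d m, ∀ j, s j + L * m ≤ k := fun s hs j => by
    linarith [mem_cube.mp hs j]
  calc (m : ℝ) ^ d * entH A (empDist x k n) = ∑ _s ∈ cube d m, entH A (empDist x k n) := by
        rw [sum_const, card_cube, nsmul_eq_mul, Nat.cast_pow]
    _ ≤ ∑ s ∈ cube d m, ((∑ r ∈ cube d (n / k), ∑ c ∈ cube d L,
          -Real.logb A (q (wordAt x m (k • r + (m • c + s))))) / ((n / k : ℕ) : ℝ) ^ d +
          ((k : ℝ) ^ d - (L * m) ^ d)) :=
        sum_le_sum fun s hs => entH_empDist_le_of_offset hA (hfit s hs) hn hq hqpos x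
    _ = (∑ s ∈ cube d m, ∑ r ∈ cube d (n / k), ∑ c ∈ cube d L,
          -Real.logb A (q (wordAt x m (k • r + (m • c + s))))) / ((n / k : ℕ) : ℝ) ^ d +
          (m : ℝ) ^ d * ((k : ℝ) ^ d - (L * m) ^ d) := by
        rw [sum_add_distrib, ← sum_div, sum_const, card_cube, nsmul_eq_mul, Nat.cast_pow]
    _ ≤ _ := by
        gcongr
        exact sum_cells_le_sum_cube (F := fun i => -Real.logb A (q (wordAt x m i)))
          (by linarith) (n / k) fun i => hcost _

end BlockCode

theorem eventually_boundary_le (d : ℕ) {m : ℕ} (hm : 0 < m) {η : ℝ} (hη : 0 < η) :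
    ∀ᶠ k : ℕ in atTop, (k : ℝ) ^ d - (((k / m - 1 : ℕ) : ℝ) * m) ^ d ≤ (k : ℝ) ^ d * η := by
  have hratio : Tendsto (fun k : ℕ => (((k / m - 1) * m : ℕ) : ℝ) / k) atTop (𝓝 1) := by
    refine tendsto_natCast_div_of_le_of_le_add (φ := fun k => (k / m - 1) * m) (c := 2 * m)
      (fun k => ?_) (fun k => ?_)
    · exact (Nat.mul_le_mul_right m (Nat.sub_le _ _)).trans (Nat.div_mul_le_self k m)
    · have hlt := Nat.lt_mul_div_succ k hm
      have hle : m * (k / m + 1) ≤ m * (k / m - 1 + 2) := Nat.mul_le_mul_left m (by lia)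
      linarith
  have hpow := hratio.pow d
  rw [one_pow] at hpow
  filter_upwards [hpow.eventually_const_lt (sub_lt_self 1 hη), eventually_gt_atTop 0] with k hk hk0
  rw [div_pow, lt_div_iff₀ (by positivity), Nat.cast_mul] at hk
  linarith

theorem eventually_entH_empDist_le (hA : 1 < A) {m : ℕ} (hm : 0 < m) {q : Word A d m → ℝ}
    (hq : q ∈ stdSimplex ℝ (Word A d m)) (hqpos : ∀ v, 0 < q v) {h' h0 : ℝ} (hh : h' < h0) :
    ∀ᶠ k in atTop, ∀ n ≥ k, ∀ x : Config A d,
      (∑ i ∈ cube d (k * (n / k)), -Real.logb A (q (wordAt x m i))) /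
          (cube d (k * (n / k))).card ≤ (m : ℝ) ^ d * h' →
        entH A (empDist x k n) ≤ (k : ℝ) ^ d * h0 := by
  filter_upwards [eventually_boundary_le d hm (sub_pos.mpr hh), eventually_ge_atTop m]
    with k hboundary hmk n hkn x havg
  have hk : 0 < k := hm.trans_le hmk
  have hn : 0 < n / k := Nat.div_pos hkn hk
  have hfit : m * (k / m - 1 + 1) ≤ k := by
    rw [Nat.sub_add_cancel (Nat.div_pos hmk hm)]
    exact Nat.mul_div_le k m
  have hspatial : (∑ i ∈ cube d (k * (n / k)), -Real.logb A (q (wordAt x m i))) /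
      ((n / k : ℕ) : ℝ) ^ d ≤ (m : ℝ) ^ d * ((k : ℝ) ^ d * h') := by
    rw [card_cube, Nat.cast_pow, Nat.cast_mul, mul_pow, div_le_iff₀ (by positivity)] at havg
    rw [div_le_iff₀ (by positivity)]
    linarith
  refine le_of_mul_le_mul_left ?_ (by positivity : (0 : ℝ) < (m : ℝ) ^ d)
  calc (m : ℝ) ^ d * entH A (empDist x k n)
      ≤ _ := entH_empDist_le hA hfit hn hq hqpos x
    _ ≤ (m : ℝ) ^ d * ((k : ℝ) ^ d * h') + (m : ℝ) ^ d * ((k : ℝ) ^ d * (h0 - h')) := by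
        gcongr
    _ = (m : ℝ) ^ d * ((k : ℝ) ^ d * h0) := by ring

theorem ErgodicShift.tendsto_measureReal_average_wordAt_le {μ : Measure (Config A d)}
    [IsProbabilityMeasure μ] (hμ : ErgodicShift μ) {m : ℕ} (g : Word A d m → ℝ) {a : ℝ}
    (ha : ∑ v, wordDist μ m v * g v < a) :
    Tendsto (fun M : ℕ =>
        μ.real {x | (∑ i ∈ cube d M, g (wordAt x m i)) / (cube d M).card ≤ a}) atTop (𝓝 1) := by
  have := hμ.ergodicVAdd
  have hmem : MemLp (fun x : Config A d => g (wordAt x m 0)) 2 μ :=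
    .of_bound ((measurable_of_countable g).comp (measurable_wordAt m 0)).aestronglyMeasurable
      (∑ v, ‖g v‖) <| .of_forall fun x =>
        Finset.single_le_sum (f := fun v => ‖g v‖) (fun _ _ => norm_nonneg _) (Finset.mem_univ _)
  have havg := (isFolner_cube d).tendstoInMeasure_average hmem
  simp only [vadd_eq_shift, ← wordAt_eq_wordAt_shift, integral_comp_wordAt] at havg
  exact tendsto_measureReal_le_of_tendstoInMeasure_const havg ha

theorem universally_typical_measure_one_general (hA : 2 ≤ A) (hd : 1 ≤ d) {h0 : ℝ}
    {μ : Measure (Config A d)} [IsProbabilityMeasure μ] (hμ : ErgodicShift μ) {h : ℝ}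
    (hrate : HasEntropyRate μ h) (hlt : h < h0) {k : ℕ → ℕ} (hk : Tendsto k atTop atTop)
    (hkn : ∀ᶠ n in atTop, k n ≤ n) :
    Tendsto (fun n => μ.real {x | entH A (empDist x (k n) n) ≤ (k n : ℝ) ^ d * h0})
      atTop (𝓝 1) := by
  obtain ⟨h', hh', hh0⟩ := exists_between hlt
  obtain ⟨m, hm, q, hq, hqpos, hcross⟩ := hrate.exists_crossEntropy_lt hd hh'
  have hside : Tendsto (fun n => k n * (n / k n)) atTop atTop := by
    refine tendsto_atTop_mono' atTop ?_ hk
    filter_upwards [hk.eventually_gt_atTop 0, hkn] with n hpos hle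
    exact Nat.le_mul_of_pos_right _ (Nat.div_pos hle hpos)
  have hcode := (hμ.tendsto_measureReal_average_wordAt_le _ hcross).comp hside
  refine tendsto_of_tendsto_of_tendsto_of_le_of_le' hcode tendsto_const_nhds ?_
    (.of_forall fun n => measureReal_le_one)
  filter_upwards [hk.eventually (eventually_entH_empDist_le hA hm hq hqpos hh0), hkn]
    with n hentropy hle
  exact measureReal_mono (hentropy n hle)

theorem tendsto_kOf (hA : 2 ≤ A) (hd : 1 ≤ d) : Tendsto (kOf A d) atTop atTop := by
  have hlog : Tendsto (fun n : ℕ => Real.logb A ((n : ℝ) ^ d)) atTop atTop :=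
    (Real.tendsto_logb_atTop (by exact_mod_cast hA)).comp
      ((tendsto_pow_atTop (by lia)).comp tendsto_natCast_atTop_atTop)
  exact tendsto_nat_floor_atTop.comp ((tendsto_rpow_atTop (by positivity)).comp hlog)

theorem kOf_le (hA : 2 ≤ A) (hd : 1 ≤ d) {n : ℕ} (hn : 0 < n) : kOf A d n ≤ n := by
  have hA' : (1 : ℝ) < A := by exact_mod_cast hA
  have hlog : Real.logb A ((n : ℝ) ^ d) ≤ (n : ℝ) ^ d := by
    rw [Real.logb_le_iff_le_rpow hA' (by positivity)]
    exact_mod_cast (Nat.lt_pow_self hA : n ^ d < A ^ n ^ d).le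
  refine Nat.floor_le_of_le ?_
  calc Real.logb A ((n : ℝ) ^ d) ^ (1 / (d : ℝ)) ≤ ((n : ℝ) ^ d) ^ (1 / (d : ℝ)) := by
        gcongr
        exact Real.logb_nonneg hA' (one_le_pow₀ (by exact_mod_cast hn))
    _ = n := by rw [one_div, Real.pow_rpow_inv_natCast n.cast_nonneg (by lia)]

/-- The universally typical sets `𝒯_n(h₀)` (words whose empirical
non-overlapping `k(n)`-block distribution has entropy at most `k(n)^d h₀`, with
`k(n) = ⌊(log_A n^d)^{1/d}⌋`) have `μ^n`-probability tending to `1` for every ergodic `μ`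
with entropy rate `h(μ) < h₀`. -/
theorem universally_typical_measure_one
    (A d : ℕ) (hA : 2 ≤ A) (hd : 1 ≤ d) (h0 : ℝ) (hh0 : 0 < h0)
    (μ : Measure (Config A d)) [IsProbabilityMeasure μ] (hμ : ErgodicShift μ)
    (h : ℝ) (hrate : HasEntropyRate μ h) (hlt : h < h0) :
    Tendsto (fun n : ℕ =>
        (μ {x : Config A d |
          entH A (empDist x (kOf A d n) n) ≤ ((kOf A d n : ℕ) : ℝ) ^ d * h0}).toReal)
      atTop (𝓝 1) :=
  universally_typical_measure_one_general hA hd hμ hrate hlt (tendsto_kOf hA hd)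
    ((eventually_gt_atTop 0).mono fun _ => kOf_le hA hd)

end SRU1408
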